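/- Let a > 0 and define H(t, x, y, x', y') = (e^{−(x−x')²/(4t)}/(√(4πt)·a)) Σ_{n∈ℤ} e^{2πi n(y−y')/a − 4π²n²t/a²} for t > 0. Let f : ℝ² → ℂ be continuous, a-periodic in the second variable, and such that f(x', y') = 0 whenever |x'| is sufficiently large. Then for every (x, y) ∈ ℝ², lim_{t → 0+} ∫_ℝ ∫_0^a H(t, x, y, x', y') f(x', y') dy' dx' = f(x, y). -/

import Mathlib

open Real MeasureTheory

/-- The heat kernel of the infinite flat cylinder of circumference `a`:
`H(t,x,y,x',y') = (e^{−(x−x')²/(4t)}/(√(4πt)·a)) Σ_{n∈ℤ} e^{2πi n(y−y')/a − 4π²n²t/a²}`. -/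
noncomputable def cylHeat (a t x y x' y' : ℝ) : ℂ :=
  ((Real.exp (-(x - x') ^ 2 / (4 * t)) / (Real.sqrt (4 * π * t) * a) : ℝ) : ℂ) *
    ∑' n : ℤ, Complex.exp (2 * (π:ℂ) * Complex.I * (n:ℂ) * ((y:ℂ) - (y':ℂ)) / (a:ℂ)
      - 4 * (π:ℂ) ^ 2 * (n:ℂ) ^ 2 * (t:ℂ) / (a:ℂ) ^ 2)

/-!
By Poisson summation, the kernel at time `t` is the product of a Gaussian density of variance `2t`
in `x'` and the `a`-periodization of such a density in `y'`. Integrating a periodic function over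
`[0, a]` against the periodized density is the same as integrating it over `ℝ` against the density
itself, so the double integral is the mean of `f` under the Gaussian law on the plane centred at
`(x, y)`. That law is the image of the standard one under `z ↦ (x, y) + √(2t) • z`, and dominated
convergence gives the limit.
-/

open Filter ProbabilityTheory Set
open scoped NNReal Topology

theorem tsum_smul_const {ι 𝕜 V : Type*} [NontriviallyNormedField 𝕜] [CompleteSpace 𝕜]
    [AddCommGroup V] [TopologicalSpace V] [IsTopologicalAddGroup V] [T2Space V] [Module 𝕜 V]
    [ContinuousSMul 𝕜 V] (k : ι → 𝕜) (v : V) : (∑' i, k i) • v = ∑' i, k i • v := by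
  obtain rfl | hv := eq_or_ne v 0
  · simp
  · exact (isClosedEmbedding_smul_left hv).map_tsum k (g := LinearMap.toSpanSingleton 𝕜 V v)

section Unfolding

variable {E : Type*} [NormedAddCommGroup E] [NormedSpace ℝ E] {a : ℝ}

theorem hasSum_intervalIntegral_comp_add_int_mul (ha : 0 < a) {g : ℝ → E} (hg : Integrable g) :
    HasSum (fun n : ℤ => ∫ s in 0..a, g (s + n * a)) (∫ s, g s) := by
  have hsum := hasSum_integral_iUnion (μ := volume) (fun n : ℤ => measurableSet_Ioc)
    (pairwise_disjoint_Ioc_zsmul a) hg.integrableOn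
  rw [iUnion_Ioc_zsmul ha, setIntegral_univ] at hsum
  refine hsum.congr_fun fun n => ?_
  have hle : n • a ≤ (n + 1) • a := zsmul_le_zsmul_left ha.le (by lia)
  rw [intervalIntegral.integral_comp_add_right, ← intervalIntegral.integral_of_le hle]
  congr 1 <;> simp [add_mul, add_comm]

theorem intervalIntegral_tsum_comp_add_int_mul (ha : 0 < a) {g : ℝ → E} (hg : Integrable g) :
    ∫ s in 0..a, ∑' n : ℤ, g (s + n * a) = ∫ s, g s := by
  have hsum := hasSum_intervalIntegral_comp_add_int_mul ha hg
  have hnorm := (hasSum_intervalIntegral_comp_add_int_mul ha hg.norm).summable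
  simp only [intervalIntegral.integral_of_le ha.le] at hsum hnorm ⊢
  have hint (n : ℤ) : Integrable (fun s => g (s + n * a)) (volume.restrict (Ioc 0 a)) :=
    (hg.comp_add_right (n * a)).integrableOn
  exact (integral_tsum_of_summable_integral_norm hint hnorm).symm.trans hsum.tsum_eq

theorem intervalIntegral_tsum_smul_of_periodic {𝕜 : Type*} [NontriviallyNormedField 𝕜]
    [CompleteSpace 𝕜] [NormedSpace 𝕜 E] (ha : 0 < a) {k : ℝ → 𝕜} {g : ℝ → E}
    (hg : Function.Periodic g a) (hkg : Integrable fun s => k s • g s) :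
    ∫ s in 0..a, (∑' n : ℤ, k (s + n * a)) • g s = ∫ s, k s • g s := by
  rw [← intervalIntegral_tsum_comp_add_int_mul ha hkg]
  simp only [tsum_smul_const, hg.int_mul _ _]

end Unfolding

theorem tsum_gaussianPDFReal_add_int_mul {a : ℝ} (ha : 0 < a) (μ : ℝ) {v : ℝ≥0} (hv : v ≠ 0)
    (y : ℝ) :
    ((∑' n : ℤ, gaussianPDFReal μ v (y + n * a) : ℝ) : ℂ) =
      (a : ℂ)⁻¹ * ∑' n : ℤ, Complex.exp (2 * π * Complex.I * n * (μ - y) / a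
        - 2 * π ^ 2 * n ^ 2 * v / a ^ 2) := by
  have hα : 0 < 2 * π * v / a ^ 2 := by positivity
  have ha' : (a : ℂ) ≠ 0 := by exact_mod_cast ha.ne'
  have hv' : ((v : ℝ) : ℂ) ≠ 0 := by exact_mod_cast hv
  have hπ : (π : ℂ) ≠ 0 := by exact_mod_cast pi_ne_zero
  have poisson := Complex.tsum_exp_neg_quadratic (a := ((2 * π * v / a ^ 2 : ℝ) : ℂ))
    (by rwa [Complex.ofReal_re]) (Complex.I * (μ - y) / a)
  have hroot : ((2 * π * v / a ^ 2 : ℝ) : ℂ) ^ (1 / 2 : ℂ) = ((√(2 * π * v) / a : ℝ) : ℂ) := by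
    rw [show (1 / 2 : ℂ) = ((1 / 2 : ℝ) : ℂ) by norm_num, ← Complex.ofReal_cpow hα.le,
      ← sqrt_eq_rpow, sqrt_div' _ (sq_nonneg a), sqrt_sq ha.le]
  have hfreq (n : ℤ) : -(π : ℂ) * ((2 * π * v / a ^ 2 : ℝ) : ℂ) * n ^ 2
      + 2 * π * (Complex.I * (μ - y) / a) * n
      = 2 * π * Complex.I * n * (μ - y) / a - 2 * π ^ 2 * n ^ 2 * v / a ^ 2 := by
    push_cast
    ring
  have hspace (n : ℤ) : -(π : ℂ) / ((2 * π * v / a ^ 2 : ℝ) : ℂ)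
      * (n + Complex.I * (Complex.I * (μ - y) / a)) ^ 2
      = ((-(y + n * a - μ) ^ 2 / (2 * v) : ℝ) : ℂ) := by
    have hI : Complex.I * (Complex.I * ((μ : ℂ) - y) / a) = (y - μ) / a := by
      linear_combination ((μ : ℂ) - y) / a * Complex.I_mul_I
    rw [hI]
    push_cast
    field_simp
    ring
  simp only [hfreq, hspace, hroot] at poisson
  rw [poisson, ← mul_assoc]
  simp only [gaussianPDFReal, tsum_mul_left, Complex.ofReal_mul, Complex.ofReal_tsum,
    Complex.ofReal_exp]
  congr 1
  push_cast
  field_simp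

theorem cylHeat_eq_gaussianPDFReal_mul_tsum {a : ℝ} (ha : 0 < a) {t : ℝ≥0} (ht : t ≠ 0)
    (x y x' y' : ℝ) :
    cylHeat a t x y x' y' = ((gaussianPDFReal x (2 * t) x' *
      ∑' n : ℤ, gaussianPDFReal y (2 * t) (y' + n * a) : ℝ) : ℂ) := by
  have hweight : rexp (-(x - x') ^ 2 / (4 * t)) / (√(4 * π * t) * a) =
      gaussianPDFReal x (2 * t) x' * a⁻¹ := by
    rw [gaussianPDFReal, NNReal.coe_mul, NNReal.coe_ofNat, sub_sq_comm x x',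
      show 2 * π * (2 * t) = 4 * π * (t : ℝ) by ring, show 2 * (2 * t) = 4 * (t : ℝ) by ring]
    ring
  have ht2 : 2 * t ≠ 0 := mul_ne_zero two_ne_zero ht
  have hdecay (n : ℤ) : 2 * (π : ℂ) ^ 2 * n ^ 2 * ((2 * t : ℝ≥0) : ℝ) / a ^ 2 =
      4 * π ^ 2 * n ^ 2 * (t : ℝ) / a ^ 2 := by
    push_cast
    ring
  rw [Complex.ofReal_mul, tsum_gaussianPDFReal_add_int_mul ha y ht2, cylHeat, hweight]
  simp only [hdecay, Complex.ofReal_mul, Complex.ofReal_inv]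
  rw [mul_assoc]

theorem gaussianReal_eq_map_standard (μ : ℝ) (v : ℝ≥0) :
    gaussianReal μ v = (gaussianReal 0 1).map (fun z => μ + √v * z) := by
  have hscale : (gaussianReal 0 1).map (√v * ·) = gaussianReal 0 v := by
    rw [gaussianReal_map_const_mul, mul_zero, mul_one]
    congr 1
    exact NNReal.eq (sq_sqrt v.2)
  calc gaussianReal μ v = (gaussianReal 0 v).map (μ + ·) := by
        rw [gaussianReal_map_const_add, zero_add]
    _ = _ := by
        rw [← hscale, Measure.map_map (by fun_prop) (by fun_prop)]
        rfl

theorem gaussianReal_prod_eq_map_standard (x y : ℝ) (v : ℝ≥0) :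
    (gaussianReal x v).prod (gaussianReal y v) =
      ((gaussianReal 0 1).prod (gaussianReal 0 1)).map (fun z => (x, y) + √v • z) := by
  rw [gaussianReal_eq_map_standard x, gaussianReal_eq_map_standard y,
    Measure.map_prod_map _ _ (by fun_prop) (by fun_prop)]
  rfl

theorem tendsto_integral_comp_add_smul {V E : Type*} [AddCommGroup V] [Module ℝ V]
    [TopologicalSpace V] [ContinuousAdd V] [ContinuousSMul ℝ V] [MeasurableSpace V] [BorelSpace V]
    [NormedAddCommGroup E] [NormedSpace ℝ E] [CompleteSpace E] (μ : Measure V)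
    [IsProbabilityMeasure μ] {g : V → E} {M : ℝ} {p : V} (hg : StronglyMeasurable g)
    (hM : ∀ z, ‖g z‖ ≤ M) (hp : ContinuousAt g p) :
    Tendsto (fun s : ℝ => ∫ z, g (p + s • z) ∂μ) (𝓝 0) (𝓝 (g p)) := by
  have hlim (z : V) : Tendsto (fun s : ℝ => g (p + s • z)) (𝓝 0) (𝓝 (g p)) := by
    have hline : Tendsto (fun s : ℝ => p + s • z) (𝓝 0) (𝓝 p) :=
      (by fun_prop : Continuous fun s : ℝ => p + s • z).tendsto' 0 p (by simp)
    exact hp.tendsto.comp hline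
  have hmeas (s : ℝ) : AEStronglyMeasurable (fun z => g (p + s • z)) μ :=
    (hg.comp_measurable (by fun_prop : Continuous fun z => p + s • z).measurable)
      |>.aestronglyMeasurable
  simpa using tendsto_integral_filter_of_dominated_convergence (fun _ => M)
    (.of_forall hmeas) (.of_forall fun s => .of_forall fun z => hM (p + s • z))
    (integrable_const M) (.of_forall hlim)

theorem exists_norm_le_of_periodic_of_eq_zero_off_compact {X E : Type*} [TopologicalSpace X]
    [NormedAddCommGroup E] {a : ℝ} (ha : 0 < a) {f : X → ℝ → E} (hf : Continuous f.uncurry)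
    (hper : ∀ x, Function.Periodic (f x) a) {K : Set X} (hK : IsCompact K)
    (hsupp : ∀ x ∉ K, f x = 0) : ∃ M, ∀ x y, ‖f x y‖ ≤ M := by
  obtain ⟨M, hM⟩ := (hK.prod isCompact_Icc).exists_bound_of_continuousOn (s := K ×ˢ Icc 0 a)
    hf.continuousOn
  refine ⟨max M 0, fun x y => ?_⟩
  by_cases hx : x ∈ K
  · obtain ⟨z, hz, hyz⟩ := (hper x).exists_mem_Ico₀ ha y
    rw [hyz]
    exact (hM (x, z) ⟨hx, Ico_subset_Icc_self hz⟩).trans (le_max_left M 0)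
  · simp [hsupp x hx]

section Cylinder

variable {E : Type*} [NormedAddCommGroup E] [NormedSpace ℂ E] {a : ℝ} {f : ℝ → ℝ → E}

theorem intervalIntegral_cylHeat_smul (ha : 0 < a) {t : ℝ≥0} (ht : t ≠ 0) {g : ℝ → E} {y : ℝ}
    (hper : Function.Periodic g a) (hg : Integrable g (gaussianReal y (2 * t))) (x x' : ℝ) :
    ∫ y' in 0..a, cylHeat a t x y x' y' • g y' =
      gaussianPDFReal x (2 * t) x' • ∫ y', g y' ∂gaussianReal y (2 * t) := by
  have ht2 : 2 * t ≠ 0 := mul_ne_zero two_ne_zero ht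
  have hint : Integrable fun y' => gaussianPDFReal y (2 * t) y' • g y' := by
    rw [gaussianReal_of_var_ne_zero y ht2, integrable_withDensity_iff_integrable_smul'
      (measurable_gaussianPDF _ _) (.of_forall fun _ => gaussianPDF_lt_top)] at hg
    simpa only [toReal_gaussianPDF] using hg
  simp only [cylHeat_eq_gaussianPDFReal_mul_tsum ha ht, Complex.coe_smul, mul_smul]
  rw [intervalIntegral.integral_smul, intervalIntegral_tsum_smul_of_periodic ha hper hint,
    integral_gaussianReal_eq_integral_smul ht2]

theorem integral_cylHeat_smul (ha : 0 < a) {t : ℝ≥0} (ht : t ≠ 0) {x y : ℝ}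
    (hper : ∀ x, Function.Periodic (f x) a)
    (hf : Integrable f.uncurry ((gaussianReal x (2 * t)).prod (gaussianReal y (2 * t)))) :
    ∫ x', ∫ y' in 0..a, cylHeat a t x y x' y' • f x' y' =
      ∫ p, f.uncurry p ∂(gaussianReal x (2 * t)).prod (gaussianReal y (2 * t)) := by
  have ht2 : 2 * t ≠ 0 := mul_ne_zero two_ne_zero ht
  rw [integral_prod _ hf, integral_gaussianReal_eq_integral_smul ht2]
  refine integral_congr_ae ?_
  filter_upwards [(gaussianReal_absolutelyContinuous' x ht2).ae_le hf.prod_right_ae] with x' hx'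
  exact intervalIntegral_cylHeat_smul ha ht (hper x') hx' x x'

theorem cylinder_heat_kernel_initial_condition_general [CompleteSpace E] {M : ℝ}
    (ha : 0 < a) (hf : StronglyMeasurable f.uncurry) (hper : ∀ x, Function.Periodic (f x) a)
    (hM : ∀ x y, ‖f x y‖ ≤ M) {x y : ℝ} (hxy : ContinuousAt f.uncurry (x, y)) :
    Tendsto (fun t : ℝ => ∫ x', ∫ y' in 0..a, cylHeat a t x y x' y' • f x' y')
      (𝓝[>] 0) (𝓝 (f x y)) := by
  have hscale : Tendsto (fun t : ℝ => √(2 * t)) (𝓝[>] 0) (𝓝 0) :=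
    ((by fun_prop : Continuous fun t : ℝ => √(2 * t)).tendsto' 0 0 (by simp)).mono_left
      nhdsWithin_le_nhds
  have hlim := (tendsto_integral_comp_add_smul ((gaussianReal 0 1).prod (gaussianReal 0 1)) hf
    (fun p => hM p.1 p.2) hxy).comp hscale
  refine hlim.congr' ?_
  filter_upwards [self_mem_nhdsWithin] with t (ht : 0 < t)
  lift t to ℝ≥0 using ht.le
  rw [integral_cylHeat_smul ha (NNReal.coe_pos.mp ht).ne' hper
    (.of_bound hf.aestronglyMeasurable M (.of_forall fun p => hM p.1 p.2)),
    gaussianReal_prod_eq_map_standard x y, integral_map (by fun_prop) hf.aestronglyMeasurable]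
  simp

end Cylinder

/-- Approximate identity property of the cylinder heat kernel: for continuous `f`
`a`-periodic in the second variable and vanishing for large `|x'|`,
`∫_ℝ ∫_0^a H(t,x,y,x',y') f(x',y') dy' dx' → f(x,y)` as `t → 0+`. -/
theorem cylinder_heat_kernel_initial_condition (a : ℝ) (ha : 0 < a)
    (f : ℝ → ℝ → ℂ) (hf : Continuous (fun p : ℝ × ℝ => f p.1 p.2))
    (hper : ∀ x y : ℝ, f x (y + a) = f x y)
    (hsupp : ∃ K : ℝ, ∀ x y : ℝ, K ≤ |x| → f x y = 0) (x y : ℝ) :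
    Filter.Tendsto
      (fun t : ℝ => ∫ x' : ℝ, ∫ y' in (0:ℝ)..a, cylHeat a t x y x' y' * f x' y')
      (nhdsWithin 0 (Set.Ioi 0)) (nhds (f x y)) := by
  obtain ⟨K, hK⟩ := hsupp
  have hzero : ∀ x ∉ Icc (-K) K, f x = 0 := fun x hx =>
    funext fun y => hK x y (not_lt.mp fun h => hx (abs_le.mp h.le))
  obtain ⟨M, hM⟩ :=
    exists_norm_le_of_periodic_of_eq_zero_off_compact ha hf hper isCompact_Icc hzero
  exact cylinder_heat_kernel_initial_condition_general ha hf.stronglyMeasurable hper hM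
    hf.continuousAt
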